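/- Assume λ, α, θ > 0, β + θ < 1, (H2), m_τ, K_τ > 0 and 0 < τ < 1. Let (X, ρ) be a minimizer of J_{(X⁰,ρ⁰)} over 𝒜 with X ≥ X⁰, set M := M(ρ, ρ⁰), and let ρ̄ be the continuous representative of ρ on [0,X]. Then: if M < 0 then ρ̄(0) = ρ₊ exp(−p_τ'(M)) where p_τ'(m) = −K_τ(−m − m_τ)₊; if M > 0 then ρ̄(0) = ρ₋; and if M = 0 then ρ₋ ≤ ρ̄(0) ≤ ρ₊. -/

import Mathlib

/-!
The minimizer is tested against two one-sided perturbations of its density near the origin: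
adding, or removing, a constant amount `s` on a short interval `(0, ε)`.

The mass `sε` that appears or disappears is exchanged with the reservoir, the Dirac mass at the
origin in the marginals of the transport problem. It travels a distance at most `ε`, so a coupling
for the original marginals can be cut and reglued into one for the perturbed marginals at an extra
cost of at most `2εΛ` per unit of mass (`W2sq_le_of_step`, `NiceDensity.W2sq_le`); in particular
the cost divided by `sε` vanishes as `ε → 0`. The interface `X` is not moved, and `Λ` is unchanged
as soon as `ε ≤ x_{ρ⁰}`. The entropy changes by at most `sε` times the derivative of `f` at
`ρ̄(0) + 2s`, respectively `-sε` times its derivative at `ρ̄(0) - 2s` (`fEnt_sub_le`, the tangent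
inequality of a convex function), and the change of `θ|M| + p_τ(M)` is, to first order in `sε`,
governed by the one-sided slopes of `|·|` and the derivative of `p_τ` at `M` (`ptau_add_le`).
Dividing the inequality `J(X, ρ) ≤ J(X, ρ ± s 1_{(0,ε)})` by `sε`, letting `ε → 0` and then `s → 0`
bounds `ρ̄(0)` from below (`boundary_lower`) and from above (`boundary_upper`). For `M ≠ 0` the
function `|M|` is differentiable, the two bounds agree and give the stated values; for `M = 0`
they give the interval `[ρ₋, ρ₊]`.

The continuous representative makes `ρ` bounded on `(0, X)`, and `ρ = 1` beyond `X`, hence all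
integrals involved are genuine, and the transport problems have finite marginals of equal mass
(the infimum defining `𝐖₂²` runs over a nonempty set).
-/

open MeasureTheory Real Set ENNReal Filter Topology

noncomputable section

/-- The threshold `ρ₋ = exp(β - θ - 1)`. -/
def rhoMinus (β θ : ℝ) : ℝ := Real.exp (β - θ - 1)

/-- The threshold `ρ₊ = exp(β + θ - 1)`. -/
def rhoPlus (β θ : ℝ) : ℝ := Real.exp (β + θ - 1)

/-- Membership in the class `𝔸` of admissible densities on `ℝ₊`:
nonnegative a.e., locally integrable together with `ρ ln ρ`, and `≡ 1` a.e. eventually. -/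
def MemAdm (ρ : ℝ → ℝ) : Prop :=
  (∀ᵐ x : ℝ, 0 < x → 0 ≤ ρ x) ∧
  LocallyIntegrableOn ρ (Ioi 0) volume ∧
  LocallyIntegrableOn (fun x => ρ x * Real.log (ρ x)) (Ioi 0) volume ∧
  ∃ x : ℝ, 0 < x ∧ (∀ᵐ y : ℝ, y ∈ Ioi x → ρ y = 1)

/-- `x_ρ`, the infimum of the points after which `ρ ≡ 1` a.e. -/
def xA (ρ : ℝ → ℝ) : ℝ :=
  sInf {x : ℝ | 0 < x ∧ ∀ᵐ y : ℝ, y ∈ Ioi x → ρ y = 1}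

/-- Membership of a pair `(X, ρ)` in the admissible set `𝒜`. -/
def MemAdmSet (X : ℝ) (ρ : ℝ → ℝ) : Prop := MemAdm ρ ∧ xA ρ ≤ X

/-- `𝐌(ρ) = -∫_{ℝ₊} (1 - ρ)`. -/
def Mfun (ρ : ℝ → ℝ) : ℝ := -∫ x in Ioi (0:ℝ), (1 - ρ x)

/-- `M(ρ, ρ̃) = 𝐌(ρ) - 𝐌(ρ̃)`. -/
def Mdiff (ρ ρt : ℝ → ℝ) : ℝ := Mfun ρ - Mfun ρt

/-- `f(r) = r (ln r - β) + β`. -/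
def fEnt (β r : ℝ) : ℝ := r * (Real.log r - β) + β

/-- The measure `ν(ρ, ρ̃) = ρ · Leb⌊(0,Λ) + (M(ρ̃,ρ))₊ δ₀`, `Λ = max(x_ρ, x_ρ̃)`. -/
def nuMeas (ρ ρt : ℝ → ℝ) : Measure ℝ :=
  (volume.withDensity (fun x => ENNReal.ofReal (ρ x))).restrict
      (Ioo 0 (max (xA ρ) (xA ρt)))
    + (ENNReal.ofReal (Mdiff ρt ρ)) • Measure.dirac 0

/-- The squared Wasserstein distance `𝐖₂²(ρ, ρ̃)`: infimum of the quadratic transport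
cost over couplings of `ν(ρ,ρ̃)` and `ν(ρ̃,ρ)`. -/
def W2sq (ρ ρt : ℝ → ℝ) : ℝ :=
  sInf {r : ℝ | ∃ γ : Measure (ℝ × ℝ),
    γ.map Prod.fst = nuMeas ρ ρt ∧ γ.map Prod.snd = nuMeas ρt ρ ∧
    r = ∫ p, (p.1 - p.2)^2 ∂γ}

/-- The penalty function `p_τ(m) = (K_τ/2) ((-m - m_τ)₊)²`. -/
def ptau (Kτ mτ m : ℝ) : ℝ := Kτ / 2 * (max (-m - mτ) 0)^2

/-- The energy functional `E_{(X⁰,ρ⁰)}(X,ρ)`. -/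
def Efun (α β θ : ℝ) (ρ0 : ℝ → ℝ) (X : ℝ) (ρ : ℝ → ℝ) : ℝ :=
  (∫ x in Ioi (0:ℝ), fEnt β (ρ x)) + θ * |Mdiff ρ ρ0| - α * X

/-- The squared tensorized metric `𝐝²((X,ρ),(X⁰,ρ⁰))`. -/
def dsq (lam : ℝ) (X0 : ℝ) (ρ0 : ℝ → ℝ) (X : ℝ) (ρ : ℝ → ℝ) : ℝ :=
  W2sq ρ ρ0 + lam * (X - X0)^2

/-- The JKO functional `J_{(X⁰,ρ⁰)}`. -/
def Jfun (lam α β θ τ Kτ mτ : ℝ) (X0 : ℝ) (ρ0 : ℝ → ℝ) (X : ℝ) (ρ : ℝ → ℝ) : ℝ :=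
  dsq lam X0 ρ0 X ρ / (2 * τ) + Efun α β θ ρ0 X ρ + ptau Kτ mτ (Mdiff ρ ρ0)

/-- `(X, ρ)` is a minimizer of the JKO functional over `𝒜`. -/
def IsJKOMin (lam α β θ τ Kτ mτ : ℝ) (X0 : ℝ) (ρ0 : ℝ → ℝ) (X : ℝ) (ρ : ℝ → ℝ) : Prop :=
  MemAdmSet X ρ ∧
  ∀ Y : ℝ, ∀ σ : ℝ → ℝ, MemAdmSet Y σ →
    Jfun lam α β θ τ Kτ mτ X0 ρ0 X ρ ≤ Jfun lam α β θ τ Kτ mτ X0 ρ0 Y σ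

/-- Hypothesis (H2) on the initial data `(X⁰, ρ⁰)`, with bounds `ρ_min, ρ_max`
and with `ρ0'` a derivative of `ρ⁰` on `[0,X⁰]` witnessing `C^{1,1}` regularity. -/
def H2 (β θ X0 ρmin ρmax : ℝ) (ρ0 ρ0' : ℝ → ℝ) : Prop :=
  0 < X0 ∧
  (∀ x : ℝ, 0 < ρ0 x) ∧
  (∀ x ∈ Icc 0 X0, HasDerivWithinAt ρ0 (ρ0' x) (Icc 0 X0) x) ∧
  (∃ K : NNReal, LipschitzOnWith K ρ0' (Icc 0 X0)) ∧
  (∀ x : ℝ, X0 < x → ρ0 x = 1) ∧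
  ρ0 0 ∈ Icc (rhoMinus β θ) (rhoPlus β θ) ∧
  0 < ρmin ∧ (∀ x ∈ Ioc 0 X0, ρmin ≤ ρ0 x ∧ ρ0 x ≤ ρmax) ∧ ρmax ≤ 1

/-- The monotone transport structure in the case `M(ρ,ρ⁰) ≥ 0`: a nondecreasing map
`T₊ : [0,X] → [0,X]`, vanishing on `[0,ℓ₊]`, pushing `ρ·Leb⌊(ℓ₊,X)` to `ρ⁰·Leb⌊(0,X)`,
with `M = ∫₀^{ℓ₊} ρ` and realizing the squared Wasserstein distance. -/
def TransportPlus (ρ0 ρ : ℝ → ℝ) (X : ℝ) (T : ℝ → ℝ) (ℓ : ℝ) : Prop :=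
  0 ≤ ℓ ∧ Measurable T ∧ MonotoneOn T (Icc 0 X) ∧
  (∀ x ∈ Icc 0 X, T x ∈ Icc 0 X) ∧
  (∀ x ∈ Icc 0 ℓ, T x = 0) ∧ T X = X ∧
  Measure.map T ((volume.withDensity (fun x => ENNReal.ofReal (ρ x))).restrict (Ioo ℓ X))
    = (volume.withDensity (fun x => ENNReal.ofReal (ρ0 x))).restrict (Ioo 0 X) ∧
  Mdiff ρ ρ0 = ∫ x in (0:ℝ)..ℓ, ρ x ∧
  W2sq ρ ρ0 = ∫ x in (0:ℝ)..X, (x - T x)^2 * ρ x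

/-- The monotone transport structure in the case `M(ρ,ρ⁰) < 0`. -/
def TransportMinus (ρ0 ρ : ℝ → ℝ) (X : ℝ) (T : ℝ → ℝ) (ℓ : ℝ) : Prop :=
  0 < ℓ ∧ Measurable T ∧ MonotoneOn T (Icc 0 X) ∧
  (∀ x ∈ Icc 0 X, T x ∈ Icc ℓ X) ∧
  T 0 = ℓ ∧ T X = X ∧
  Measure.map T ((volume.withDensity (fun x => ENNReal.ofReal (ρ x))).restrict (Ioo 0 X))
    = (volume.withDensity (fun x => ENNReal.ofReal (ρ0 x))).restrict (Ioo ℓ X) ∧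
  -(Mdiff ρ ρ0) = ∫ y in (0:ℝ)..ℓ, ρ0 y ∧
  W2sq ρ ρ0 = (∫ x in (0:ℝ)..X, (x - T x)^2 * ρ x) + ∫ y in (0:ℝ)..ℓ, y^2 * ρ0 y

/-- Transport structure with sign convention: `T` is `T₊` (with some `ℓ₊`, and `ℓ₋ = ℓ`
is taken `= 0`) when `M ≥ 0`, and `T₋` with `ℓ₋ = ℓ > 0` when `M < 0`. -/
def TransportStruct (ρ0 ρ : ℝ → ℝ) (X : ℝ) (T : ℝ → ℝ) (ℓ : ℝ) : Prop :=
  (0 ≤ Mdiff ρ ρ0 ∧ ℓ = 0 ∧ ∃ ℓp : ℝ, TransportPlus ρ0 ρ X T ℓp) ∨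
  (Mdiff ρ ρ0 < 0 ∧ TransportMinus ρ0 ρ X T ℓ)

/-- `ρ̄` is the continuous representative of `ρ` on `[0,X]`. -/
def ContRep (X : ℝ) (ρ ρb : ℝ → ℝ) : Prop :=
  ContinuousOn ρb (Icc 0 X) ∧ (∀ᵐ x : ℝ, x ∈ Ioo 0 X → ρ x = ρb x)

/-! ### Couplings of finite measures -/

/-- The quadratic transport cost as an extended nonnegative number. -/
def tcost (p : ℝ × ℝ) : ℝ≥0∞ := ENNReal.ofReal ((p.1 - p.2) ^ 2)

lemma measurable_tcost : Measurable tcost := by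
  unfold tcost; fun_prop

lemma exists_coupling {μ ν : Measure ℝ} [IsFiniteMeasure μ] [IsFiniteMeasure ν]
    (h : μ univ = ν univ) :
    ∃ γ : Measure (ℝ × ℝ), γ.map Prod.fst = μ ∧ γ.map Prod.snd = ν := by
  by_cases h0 : μ univ = 0
  · have hμ : μ = 0 := Measure.measure_univ_eq_zero.1 h0
    have hν : ν = 0 := Measure.measure_univ_eq_zero.1 (h ▸ h0)
    exact ⟨0, by simp [hμ], by simp [hν]⟩
  · refine ⟨(μ univ)⁻¹ • μ.prod ν, ?_, ?_⟩
    · rw [Measure.map_smul, Measure.map_fst_prod, ← h, smul_smul,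
        ENNReal.inv_mul_cancel h0 (measure_ne_top _ _), one_smul]
    · rw [Measure.map_smul, Measure.map_snd_prod, smul_smul,
        ENNReal.inv_mul_cancel h0 (measure_ne_top _ _), one_smul]

/-- A measure `κ` below the image of `γ` lifts to a part `γ₂` of `γ`: weight `γ` by the
density of `κ`, which is at most one. -/
lemma exists_split {Ω : Type*} [MeasurableSpace Ω] (γ : Measure Ω) [IsFiniteMeasure γ]
    {f : Ω → ℝ} (hf : Measurable f) {κ : Measure ℝ} (h : κ ≤ γ.map f) :
    ∃ γ₁ γ₂ : Measure Ω, γ₁ + γ₂ = γ ∧ γ₂.map f = κ := by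
  have hfin : IsFiniteMeasure (γ.map f) := inferInstance
  have : IsFiniteMeasure κ := isFiniteMeasure_of_le _ h
  set g := κ.rnDeriv (γ.map f) with hg
  have hgm : Measurable g := Measure.measurable_rnDeriv _ _
  have hg1 : ∀ᵐ ω ∂γ, g (f ω) ≤ 1 :=
    ae_of_ae_map hf.aemeasurable (Measure.rnDeriv_le_one_of_le h)
  refine ⟨γ.withDensity (fun ω => 1 - g (f ω)), γ.withDensity (fun ω => g (f ω)), ?_, ?_⟩
  · rw [← withDensity_add_right _ (show Measurable fun ω => g (f ω) from hgm.comp hf)]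
    conv_rhs => rw [← withDensity_one (μ := γ)]
    apply withDensity_congr_ae
    filter_upwards [hg1] with ω hω
    simp [tsub_add_cancel_of_le hω]
  · ext s hs
    rw [Measure.map_apply hf hs, withDensity_apply _ (hf hs)]
    rw [← setLIntegral_map hs hgm hf, ← withDensity_apply _ hs, hg,
      Measure.withDensity_rnDeriv_eq _ _ (Measure.absolutelyContinuous_of_le h)]

lemma measure_add_cancel {μ ν κ : Measure ℝ} [IsFiniteMeasure κ] (h : μ + κ = ν + κ) :
    μ = ν := by
  ext s hs
  have := congrArg (fun m : Measure ℝ => m s) h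
  simp only [Measure.add_apply] at this
  exact (ENNReal.add_left_inj (measure_ne_top κ s)).1 this

/-- Every coupling of `(μ, ν)` yields a coupling of `(μ', ν')` whose quadratic cost is larger by
at most `K`. -/
def CouplingStep (μ ν μ' ν' : Measure ℝ) (K : ℝ≥0∞) : Prop :=
  ∀ γ : Measure (ℝ × ℝ), γ.map Prod.fst = μ → γ.map Prod.snd = ν →
    ∃ γ' : Measure (ℝ × ℝ), γ'.map Prod.fst = μ' ∧ γ'.map Prod.snd = ν' ∧
      ∫⁻ p, tcost p ∂γ' ≤ ∫⁻ p, tcost p ∂γ + K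

lemma isFiniteMeasure_of_fst {γ : Measure (ℝ × ℝ)} {μ : Measure ℝ} [IsFiniteMeasure μ]
    (h : γ.map Prod.fst = μ) : IsFiniteMeasure γ := by
  constructor
  have h1 := congrArg (fun m : Measure ℝ => m univ) h
  simp only [Measure.map_apply measurable_fst MeasurableSet.univ, preimage_univ] at h1
  rw [h1]; exact measure_lt_top _ _

lemma map_univ_eq {γ : Measure (ℝ × ℝ)} {f : ℝ × ℝ → ℝ} (hf : Measurable f) :
    (γ.map f) univ = γ univ := by
  rw [Measure.map_apply hf MeasurableSet.univ, preimage_univ]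

lemma ae_dirac_eq_zero (m : ℝ≥0∞) : ∀ᵐ x ∂(m • Measure.dirac (0 : ℝ)), x = 0 := by
  refine Measure.ae_smul_measure ?_ m
  exact (ae_dirac_iff (measurableSet_singleton (0:ℝ))).2 rfl

lemma dirac_univ (m : ℝ≥0∞) : (m • Measure.dirac (0 : ℝ)) univ = m := by simp

lemma ae_snd_of_le {γ γ' : Measure (ℝ × ℝ)} {ν : Measure ℝ} (h : γ'.map Prod.snd = ν)
    (hle : γ ≤ γ') {p : ℝ → Prop} (hp : ∀ᵐ y ∂ν, p y) : ∀ᵐ q ∂γ, p q.2 := by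
  rw [← h] at hp
  exact ae_mono hle (ae_of_ae_map measurable_snd.aemeasurable hp)

lemma ae_fst_of_eq {γ : Measure (ℝ × ℝ)} {μ : Measure ℝ} (h : γ.map Prod.fst = μ)
    {p : ℝ → Prop} (hp : ∀ᵐ y ∂μ, p y) : ∀ᵐ q ∂γ, p q.1 := by
  rw [← h] at hp
  exact ae_of_ae_map measurable_fst.aemeasurable hp

lemma lintegral_le_add_const {γ : Measure (ℝ × ℝ)} {f g : ℝ × ℝ → ℝ≥0∞} {c : ℝ≥0∞}
    (h : ∀ᵐ p ∂γ, f p ≤ g p + c) : ∫⁻ p, f p ∂γ ≤ ∫⁻ p, g p ∂γ + c * γ univ := by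
  refine (lintegral_mono_ae h).trans ?_
  rw [lintegral_add_right _ measurable_const, lintegral_const]

section steps

variable {V μ ν : Measure ℝ} [IsFiniteMeasure V] {ε Λ : ℝ}

/-- Extra mass near `0` on the first side is coupled with extra mass at `0` on the second. -/
lemma step_add_nonneg (hεΛ : ε ≤ Λ) (hV : ∀ᵐ x ∂V, x ∈ Icc 0 ε) :
    CouplingStep μ ν (μ + V) (ν + V univ • Measure.dirac 0)
      (ENNReal.ofReal (2 * ε * Λ) * V univ) := by
  intro γ h1 h2
  have : IsFiniteMeasure (V univ • Measure.dirac (0:ℝ)) := ⟨by simp⟩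
  obtain ⟨n, hn1, hn2⟩ := exists_coupling (μ := V) (ν := V univ • Measure.dirac 0) (by simp)
  refine ⟨γ + n, ?_, ?_, ?_⟩
  · rw [Measure.map_add _ _ measurable_fst, h1, hn1]
  · rw [Measure.map_add _ _ measurable_snd, h2, hn2]
  · rw [lintegral_add_measure]
    gcongr
    have hx := ae_fst_of_eq hn1 hV
    have hy := ae_snd_of_le hn2 le_rfl (ae_dirac_eq_zero (V univ))
    have := lintegral_le_add_const (γ := n) (f := tcost) (g := fun _ => 0)
      (c := ENNReal.ofReal (2 * ε * Λ)) (by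
        filter_upwards [hx, hy] with p hx hy
        rw [zero_add]
        apply ENNReal.ofReal_le_ofReal
        rw [hy]
        nlinarith [hx.1, hx.2, mul_nonneg hx.1 (sub_nonneg.2 hx.2),
          mul_nonneg (hx.1.trans hx.2) (sub_nonneg.2 hεΛ),
          mul_nonneg (hx.1.trans hx.2) (sub_nonneg.2 hx.2)])
    rwa [lintegral_zero, zero_add, ← map_univ_eq measurable_fst, hn1] at this

/-- Mass near `0` on the first side is moved to `0`. -/
lemma step_remove_nonpos [IsFiniteMeasure μ] (hV : ∀ᵐ x ∂V, x ∈ Icc 0 ε)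
    (hν : ∀ᵐ y ∂ν, y ∈ Icc 0 Λ) :
    CouplingStep (μ + V) ν (μ + V univ • Measure.dirac 0) ν
      (ENNReal.ofReal (2 * ε * Λ) * V univ) := by
  intro γ h1 h2
  have := isFiniteMeasure_of_fst h1
  obtain ⟨γ₁, γ₂, rfl, h3⟩ := exists_split γ measurable_fst (κ := V)
    (by rw [h1]; exact Measure.le_add_left le_rfl)
  have h4 : γ₁.map Prod.fst = μ := by
    apply measure_add_cancel (κ := V)
    rw [← h1, Measure.map_add _ _ measurable_fst, h3]
  have hm : Measurable (fun p : ℝ × ℝ => ((0:ℝ), p.2)) := by fun_prop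
  refine ⟨γ₁ + γ₂.map (fun p => (0, p.2)), ?_, ?_, ?_⟩
  · rw [Measure.map_add _ _ measurable_fst, h4, Measure.map_map measurable_fst hm]
    congr 1
    have : (Prod.fst ∘ fun p : ℝ × ℝ => ((0:ℝ), p.2)) = fun _ => (0:ℝ) := rfl
    rw [this, Measure.map_const, ← h3, map_univ_eq measurable_fst]
  · rw [Measure.map_add _ _ measurable_snd, ← h2, Measure.map_add _ _ measurable_snd,
      Measure.map_map measurable_snd hm]
    rfl
  · rw [lintegral_add_measure, lintegral_add_measure, add_assoc,
      lintegral_map measurable_tcost hm]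
    gcongr
    rw [← h3, map_univ_eq measurable_fst]
    apply lintegral_le_add_const
    filter_upwards [ae_fst_of_eq h3 hV, ae_snd_of_le h2 (Measure.le_add_left le_rfl) hν]
      with p hx hy
    unfold tcost
    rw [← ENNReal.ofReal_add (by positivity)
      (by have := hx.1.trans hx.2; have := hy.1.trans hy.2; positivity)]
    apply ENNReal.ofReal_le_ofReal
    simp only
    nlinarith [mul_nonneg hx.1 (sub_nonneg.2 hy.2),
      mul_nonneg (sub_nonneg.2 hx.2) (hy.1.trans hy.2), sq_nonneg p.1]

/-- Mass at `0` on the first side is moved to a neighbourhood of `0`. -/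
lemma step_add_neg [IsFiniteMeasure μ] (hεΛ : ε ≤ Λ) (hV : ∀ᵐ x ∂V, x ∈ Icc 0 ε)
    (hν : ∀ᵐ y ∂ν, y ∈ Icc 0 Λ) :
    CouplingStep (μ + V univ • Measure.dirac 0) ν (μ + V) ν
      (ENNReal.ofReal (2 * ε * Λ) * V univ) := by
  intro γ h1 h2
  have hd : IsFiniteMeasure (V univ • Measure.dirac (0:ℝ)) := ⟨by simp⟩
  have := isFiniteMeasure_of_fst h1
  obtain ⟨γ₁, γ₂, rfl, h3⟩ := exists_split γ measurable_fst (κ := V univ • Measure.dirac 0)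
    (by rw [h1]; exact Measure.le_add_left le_rfl)
  have h4 : γ₁.map Prod.fst = μ := by
    apply measure_add_cancel (κ := V univ • Measure.dirac 0)
    rw [← h1, Measure.map_add _ _ measurable_fst, h3]
  have : IsFiniteMeasure γ₂ := isFiniteMeasure_of_fst h3
  obtain ⟨n, hn1, hn2⟩ := exists_coupling (μ := V) (ν := γ₂.map Prod.snd) (by
    rw [map_univ_eq measurable_snd, ← map_univ_eq measurable_fst, h3, dirac_univ])
  have hνγ : ∀ᵐ y ∂(γ₂.map Prod.snd), y ∈ Icc 0 Λ := by
    refine ae_mono ?_ (h2 ▸ hν)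
    rw [Measure.map_add _ _ measurable_snd]
    exact Measure.le_add_left le_rfl
  refine ⟨γ₁ + n, ?_, ?_, ?_⟩
  · rw [Measure.map_add _ _ measurable_fst, h4, hn1]
  · rw [Measure.map_add _ _ measurable_snd, hn2, ← Measure.map_add _ _ measurable_snd, h2]
  · rw [lintegral_add_measure, lintegral_add_measure, add_assoc]
    gcongr
    have e1 : ∫⁻ p, tcost p ∂n ≤ ∫⁻ p, ENNReal.ofReal (p.2 ^ 2) ∂n
        + ENNReal.ofReal (2 * ε * Λ) * V univ := by
      rw [← hn1, map_univ_eq measurable_fst]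
      apply lintegral_le_add_const
      filter_upwards [ae_fst_of_eq hn1 hV, ae_snd_of_le hn2 le_rfl hνγ] with p hx hy
      unfold tcost
      rw [← ENNReal.ofReal_add (by positivity)
        (by have := hx.1.trans hx.2; have := hy.1.trans hy.2; positivity)]
      apply ENNReal.ofReal_le_ofReal
      nlinarith [mul_nonneg hx.1 hy.1, mul_nonneg hx.1 (sub_nonneg.2 hx.2),
        mul_nonneg (hx.1.trans hx.2) (sub_nonneg.2 hεΛ),
        mul_nonneg (hx.1.trans hx.2) (sub_nonneg.2 hx.2)]
    have e2 : ∫⁻ p, ENNReal.ofReal (p.2 ^ 2) ∂n = ∫⁻ p, tcost p ∂γ₂ := by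
      have hsq : Measurable (fun y : ℝ => ENNReal.ofReal (y ^ 2)) := by fun_prop
      rw [← lintegral_map hsq measurable_snd, hn2, lintegral_map hsq measurable_snd]
      apply lintegral_congr_ae
      filter_upwards [ae_fst_of_eq h3 (ae_dirac_eq_zero _)] with p hp
      simp [tcost, hp]
    rwa [e2] at e1

/-- Mass near `0` on the first side and the same amount of mass at `0` on the second side are
removed. The partners of the removed masses are coupled with each other. -/
lemma step_remove_pos [IsFiniteMeasure μ] (hV : ∀ᵐ x ∂V, x ∈ Icc 0 ε)
    (hVμ : V ≤ μ)
    (hVν : V univ • Measure.dirac 0 ≤ ν)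
    (hμs : ∀ᵐ x ∂μ, x ∈ Icc 0 Λ) (hν : ∀ᵐ y ∂ν, y ∈ Icc 0 Λ) (hεΛ : ε ≤ Λ) (hΛ : 0 ≤ Λ) :
    CouplingStep (μ + V) (ν + V univ • Measure.dirac 0) μ ν
      (ENNReal.ofReal (2 * ε * Λ) * V univ) := by
  intro γ h1 h2
  have hd : IsFiniteMeasure (V univ • Measure.dirac (0:ℝ)) := ⟨by simp⟩
  have := isFiniteMeasure_of_fst h1
  have hfst : ∀ᵐ x ∂(μ + V), x ∈ Icc 0 Λ := by
    rw [ae_add_measure_iff]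
    refine ⟨hμs, ?_⟩
    filter_upwards [hV] with x hx using ⟨hx.1, hx.2.trans hεΛ⟩
  have hsnd : ∀ᵐ x ∂(ν + V univ • Measure.dirac 0), x ∈ Icc 0 Λ := by
    rw [ae_add_measure_iff]
    refine ⟨hν, ?_⟩
    filter_upwards [ae_dirac_eq_zero (V univ)] with x hx
    rw [hx]; exact ⟨le_rfl, hΛ⟩
  -- Splitting two halves of `γ` separately keeps the two removed parts disjoint.
  have two_halves : ∀ {Ω : Type} [MeasurableSpace Ω] (κ : Measure Ω),
      (2⁻¹ : ℝ≥0∞) • κ + (2⁻¹ : ℝ≥0∞) • κ = κ := by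
    intro Ω _ κ
    rw [← add_smul, ENNReal.inv_two_add_inv_two, one_smul]
  have half_le : ∀ {κ κ' : Measure ℝ}, κ ≤ κ' → κ ≤ (2⁻¹ : ℝ≥0∞) • (κ' + κ) := by
    intro κ κ' h
    have hs : ∀ (s : Set ℝ), κ s ≤ ((2⁻¹ : ℝ≥0∞) • (κ' + κ)) s := by
      intro s
      have h0 := congrArg (fun m : Measure ℝ => m s) (two_halves κ)
      simp only [Measure.add_apply, Measure.smul_apply, smul_eq_mul] at h0 ⊢
      rw [mul_add]
      calc κ s = 2⁻¹ * κ s + 2⁻¹ * κ s := h0.symm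
        _ ≤ _ := by gcongr
    exact fun s => hs s
  have hγh : IsFiniteMeasure ((2⁻¹ : ℝ≥0∞) • γ) := by
    refine isFiniteMeasure_of_le γ ?_
    conv_rhs => rw [← two_halves γ]
    exact Measure.le_add_left le_rfl
  obtain ⟨α₁, α₂, hα, hα2⟩ := exists_split ((2⁻¹ : ℝ≥0∞) • γ) measurable_fst (κ := V)
    (by rw [Measure.map_smul, h1]; exact half_le hVμ)
  obtain ⟨β₁, β₂, hβ, hβ2⟩ := exists_split ((2⁻¹ : ℝ≥0∞) • γ) measurable_snd
    (κ := V univ • Measure.dirac 0) (by rw [Measure.map_smul, h2]; exact half_le hVν)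
  have hγ : (α₁ + α₂) + (β₁ + β₂) = γ := by rw [hα, hβ, two_halves]
  have hα2γ : α₂ ≤ γ := by
    rw [← hγ]; exact (Measure.le_add_left le_rfl).trans (Measure.le_add_right le_rfl)
  have hβ2γ : β₂ ≤ γ := by
    rw [← hγ]; exact (Measure.le_add_left le_rfl).trans (Measure.le_add_left le_rfl)
  have : IsFiniteMeasure α₂ := isFiniteMeasure_of_le _ hα2γ
  have : IsFiniteMeasure β₂ := isFiniteMeasure_of_le _ hβ2γ
  have hα2u : α₂ univ = V univ := by rw [← map_univ_eq measurable_fst, hα2]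
  have hβ2u : β₂ univ = V univ := by rw [← map_univ_eq measurable_snd, hβ2, dirac_univ]
  obtain ⟨n, hn1, hn2⟩ := exists_coupling (μ := β₂.map Prod.fst) (ν := α₂.map Prod.snd) (by
    rw [map_univ_eq measurable_snd, map_univ_eq measurable_fst, hα2u, hβ2u])
  refine ⟨α₁ + β₁ + n, ?_, ?_, ?_⟩
  · apply measure_add_cancel (κ := V)
    rw [← h1, ← hγ]
    simp only [Measure.map_add _ _ measurable_fst, hn1, hα2]
    abel
  · apply measure_add_cancel (κ := V univ • Measure.dirac 0)
    rw [← h2, ← hγ]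
    simp only [Measure.map_add _ _ measurable_snd, hn2, hβ2]
    abel
  · have hx0 := ae_mono hβ2γ (ae_fst_of_eq h1 hfst)
    have hy0 := ae_snd_of_le h2 hα2γ hsnd
    have hsq : Measurable (fun y : ℝ => ENNReal.ofReal (y ^ 2)) := by fun_prop
    have hnx : ∀ᵐ p ∂n, p.1 ∈ Icc 0 Λ := by
      refine ae_fst_of_eq hn1 ?_
      exact (ae_map_iff measurable_fst.aemeasurable measurableSet_Icc).2 hx0
    have hny : ∀ᵐ p ∂n, p.2 ∈ Icc 0 Λ := by
      refine ae_snd_of_le hn2 le_rfl ?_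
      exact (ae_map_iff measurable_snd.aemeasurable measurableSet_Icc).2 hy0
    have e1 : ∫⁻ p, tcost p ∂n ≤
        ∫⁻ p, ENNReal.ofReal (p.1 ^ 2) ∂n + ∫⁻ p, ENNReal.ofReal (p.2 ^ 2) ∂n := by
      rw [← lintegral_add_left (by fun_prop)]
      apply lintegral_mono_ae
      filter_upwards [hnx, hny] with p hx hy
      unfold tcost
      rw [← ENNReal.ofReal_add (by positivity) (by positivity)]
      apply ENNReal.ofReal_le_ofReal
      nlinarith [mul_nonneg hx.1 hy.1]
    have e2 : ∫⁻ p, ENNReal.ofReal (p.1 ^ 2) ∂n = ∫⁻ p, tcost p ∂β₂ := by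
      rw [← lintegral_map hsq measurable_fst, hn1, lintegral_map hsq measurable_fst]
      apply lintegral_congr_ae
      filter_upwards [ae_snd_of_le hβ2 le_rfl (ae_dirac_eq_zero _)] with p hp
      simp [tcost, hp]
    have e3 : ∫⁻ p, ENNReal.ofReal (p.2 ^ 2) ∂n ≤ ∫⁻ p, tcost p ∂α₂
        + ENNReal.ofReal (2 * ε * Λ) * V univ := by
      rw [← lintegral_map hsq measurable_snd, hn2, lintegral_map hsq measurable_snd, ← hα2u]
      apply lintegral_le_add_const
      filter_upwards [ae_fst_of_eq hα2 hV, hy0] with p hx hy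
      unfold tcost
      rw [← ENNReal.ofReal_add (by positivity)
        (by have := hx.1.trans hx.2; have := hy.1.trans hy.2; positivity)]
      apply ENNReal.ofReal_le_ofReal
      nlinarith [mul_nonneg hx.1 (sub_nonneg.2 hy.2),
        mul_nonneg (sub_nonneg.2 hx.2) (hy.1.trans hy.2), sq_nonneg p.1]
    have e4 : ∫⁻ p, tcost p ∂γ = ∫⁻ p, tcost p ∂α₁ + ∫⁻ p, tcost p ∂α₂
        + (∫⁻ p, tcost p ∂β₁ + ∫⁻ p, tcost p ∂β₂) := by
      rw [← hγ]; simp only [lintegral_add_measure]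
    rw [e4, lintegral_add_measure, lintegral_add_measure]
    calc _ ≤ ∫⁻ p, tcost p ∂α₁ + ∫⁻ p, tcost p ∂β₁ + (∫⁻ p, tcost p ∂β₂
          + (∫⁻ p, tcost p ∂α₂ + ENNReal.ofReal (2 * ε * Λ) * V univ)) := by
            gcongr
            refine e1.trans ?_
            rw [e2]
            gcongr
      _ = _ := by ring

end steps

/-! ### Comparison of squared Wasserstein distances -/

lemma integral_cost_eq (γ : Measure (ℝ × ℝ)) :
    ∫ p, (p.1 - p.2) ^ 2 ∂γ = (∫⁻ p, tcost p ∂γ).toReal := by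
  rw [integral_eq_lintegral_of_nonneg_ae (Eventually.of_forall fun p => sq_nonneg _)
    (by fun_prop)]
  rfl

/-- Finiteness of the costs and existence of couplings are needed because `W2sq` is an infimum
of real numbers, with value `0` if there are no couplings. -/
lemma W2sq_le_of_step {ρ σ ρ0 : ℝ → ℝ} {K : ℝ} (hK : 0 ≤ K)
    (hstep : CouplingStep (nuMeas ρ ρ0) (nuMeas ρ0 ρ) (nuMeas σ ρ0) (nuMeas ρ0 σ)
      (ENNReal.ofReal K))
    (hne : ∃ γ : Measure (ℝ × ℝ), γ.map Prod.fst = nuMeas ρ ρ0 ∧ γ.map Prod.snd = nuMeas ρ0 ρ)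
    (hfin : ∀ γ : Measure (ℝ × ℝ), γ.map Prod.fst = nuMeas ρ ρ0 → γ.map Prod.snd = nuMeas ρ0 ρ →
      ∫⁻ p, tcost p ∂γ ≠ ∞) :
    W2sq σ ρ0 ≤ W2sq ρ ρ0 + K := by
  rw [← sub_le_iff_le_add]
  unfold W2sq
  apply le_csInf
  · obtain ⟨γ, h1, h2⟩ := hne
    exact ⟨_, γ, h1, h2, rfl⟩
  · rintro r ⟨γ, h1, h2, rfl⟩
    rw [sub_le_iff_le_add]
    obtain ⟨γ', h1', h2', hc⟩ := hstep γ h1 h2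
    refine le_trans (csInf_le (a := ∫ p, (p.1 - p.2) ^ 2 ∂γ') ?_ ⟨γ', h1', h2', rfl⟩) ?_
    · refine ⟨0, ?_⟩
      rintro r ⟨γ, -, -, rfl⟩
      exact integral_nonneg fun p => sq_nonneg _
    · rw [integral_cost_eq, integral_cost_eq]
      have h := ENNReal.toReal_mono (ENNReal.add_ne_top.2 ⟨hfin γ h1 h2, ENNReal.ofReal_ne_top⟩) hc
      rwa [ENNReal.toReal_add (hfin γ h1 h2) ENNReal.ofReal_ne_top, ENNReal.toReal_ofReal hK] at h

/-! ### Bounded densities -/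

/-- A measurable density on `ℝ₊` with values in `[0, B]` which is `1` beyond `X`. -/
structure NiceDensity (B X : ℝ) (σ : ℝ → ℝ) : Prop where
  nonneg : ∀ᵐ x : ℝ, 0 < x → 0 ≤ σ x
  le_bound : ∀ᵐ x : ℝ, 0 < x → σ x ≤ B
  meas : AEMeasurable σ (volume.restrict (Ioi 0))
  tail : ∀ᵐ x : ℝ, X < x → σ x = 1

/-- The density `σ` with the constant `t` added on `(0, ε)`. -/
def bump (σ : ℝ → ℝ) (t ε : ℝ) : ℝ → ℝ := fun x => σ x + (Ioo 0 ε).indicator (fun _ => t) x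

lemma bump_of_mem {σ : ℝ → ℝ} {t ε x : ℝ} (h : x ∈ Ioo 0 ε) : bump σ t ε x = σ x + t := by
  simp [bump, h]

lemma bump_of_notMem {σ : ℝ → ℝ} {t ε x : ℝ} (h : x ∉ Ioo 0 ε) : bump σ t ε x = σ x := by
  simp [bump, h]

lemma bump_bump_neg (σ : ℝ → ℝ) (t ε : ℝ) : bump (bump σ (-t) ε) t ε = σ := by
  funext x
  by_cases h : x ∈ Ioo 0 ε
  · rw [bump_of_mem h, bump_of_mem h]; ring
  · rw [bump_of_notMem h, bump_of_notMem h]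

/-- The restriction of `σ · Leb` to `(0, Λ)`. -/
def densMeas (σ : ℝ → ℝ) (Λ : ℝ) : Measure ℝ :=
  (volume.withDensity (fun x => ENNReal.ofReal (σ x))).restrict (Ioo 0 Λ)

lemma nuMeas_eq (ρ ρt : ℝ → ℝ) : nuMeas ρ ρt = densMeas ρ (max (xA ρ) (xA ρt)) +
    ENNReal.ofReal (Mdiff ρt ρ) • Measure.dirac 0 := rfl

lemma ae_densMeas_mem (σ : ℝ → ℝ) (Λ : ℝ) : ∀ᵐ x ∂(densMeas σ Λ), x ∈ Icc 0 Λ := by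
  filter_upwards [ae_restrict_mem measurableSet_Ioo] with x hx using Ioo_subset_Icc_self hx

lemma densMeas_bump {σ : ℝ → ℝ} {s ε Λ : ℝ} (hσ : ∀ᵐ x : ℝ, 0 < x → 0 ≤ σ x) (hs : 0 ≤ s)
    (hε : ε ≤ Λ) : densMeas (bump σ s ε) Λ =
      densMeas σ Λ + ENNReal.ofReal s • volume.restrict (Ioo 0 ε) := by
  unfold densMeas
  rw [restrict_withDensity measurableSet_Ioo, restrict_withDensity measurableSet_Ioo]
  have h1 : (fun x => ENNReal.ofReal (bump σ s ε x)) =ᵐ[volume.restrict (Ioo 0 Λ)]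
      (fun x => ENNReal.ofReal (σ x)) + (Ioo 0 ε).indicator (fun _ => ENNReal.ofReal s) := by
    filter_upwards [ae_restrict_of_ae hσ, ae_restrict_mem measurableSet_Ioo] with x hx hx'
    by_cases h : x ∈ Ioo 0 ε
    · rw [bump_of_mem h, Pi.add_apply, indicator_of_mem h, ENNReal.ofReal_add (hx hx'.1) hs]
    · rw [bump_of_notMem h, Pi.add_apply, indicator_of_notMem h, add_zero]
  rw [withDensity_congr_ae h1,
    withDensity_add_right _ (measurable_const.indicator measurableSet_Ioo),
    withDensity_indicator measurableSet_Ioo,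
    Measure.restrict_restrict_of_subset (Ioo_subset_Ioo_right hε), withDensity_const]

namespace NiceDensity

variable {B X : ℝ} {σ : ℝ → ℝ}

lemma integrableOn_comp (h : NiceDensity B X σ) {g : ℝ → ℝ} (hg : Continuous g) (b : ℝ) :
    IntegrableOn (fun x => g (σ x)) (Ioc 0 b) := by
  obtain ⟨C, hC⟩ := (isCompact_Icc (a := (0:ℝ)) (b := B)).exists_bound_of_continuousOn
    hg.continuousOn
  refine Integrable.of_bound (C := C) ?_ ?_
  · exact (hg.measurable.comp_aemeasurable
      (h.meas.mono_set Ioc_subset_Ioi_self)).aestronglyMeasurable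
  · filter_upwards [ae_restrict_of_ae h.nonneg, ae_restrict_of_ae h.le_bound,
      ae_restrict_mem measurableSet_Ioc] with x h1 h2 hx
    exact hC _ ⟨h1 hx.1, h2 hx.1⟩

lemma integrableOn_comp_Ioi (h : NiceDensity B X σ) {g : ℝ → ℝ} (hg : Continuous g)
    (hg1 : g 1 = 0) : IntegrableOn (fun x => g (σ x)) (Ioi 0) := by
  have h1 : IntegrableOn (fun x => g (σ x)) (Ioi X) := by
    refine (integrableOn_zero (ε' := ℝ)).congr ?_
    filter_upwards [ae_restrict_of_ae h.tail, ae_restrict_mem measurableSet_Ioi] with x hx hx'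
    rw [hx hx', hg1]
  refine ((h.integrableOn_comp hg X).union h1).mono_set ?_
  intro x hx
  rcases le_or_gt x X with h | h
  · exact Or.inl ⟨hx, h⟩
  · exact Or.inr h

lemma locallyIntegrableOn_comp (h : NiceDensity B X σ) {g : ℝ → ℝ} (hg : Continuous g) :
    LocallyIntegrableOn (fun x => g (σ x)) (Ioi 0) volume := by
  intro x hx
  refine ⟨Ioc 0 (x + 1), ?_, h.integrableOn_comp hg _⟩
  exact mem_nhdsWithin_of_mem_nhds (Ioc_mem_nhds hx (by linarith))

lemma memAdm (h : NiceDensity B X σ) (hX : 0 < X) : MemAdm σ := by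
  refine ⟨h.nonneg, h.locallyIntegrableOn_comp continuous_id,
    h.locallyIntegrableOn_comp Real.continuous_mul_log, X, hX, h.tail⟩

lemma bddBelow_xA (σ : ℝ → ℝ) :
    BddBelow {x : ℝ | 0 < x ∧ ∀ᵐ y : ℝ, y ∈ Ioi x → σ y = 1} :=
  ⟨0, fun _ hx => hx.1.le⟩

lemma xA_le (h : NiceDensity B X σ) (hX : 0 < X) : xA σ ≤ X :=
  csInf_le (bddBelow_xA σ) ⟨hX, h.tail⟩

lemma memAdmSet (h : NiceDensity B X σ) (hX : 0 < X) : MemAdmSet X σ :=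
  ⟨h.memAdm hX, h.xA_le hX⟩

end NiceDensity

lemma xA_nonneg (σ : ℝ → ℝ) : 0 ≤ xA σ := Real.sInf_nonneg fun _ hx => hx.1.le

/-- The infimum defining `x_σ` may be used in place of the points it is taken over. -/
lemma tail_xA {σ : ℝ → ℝ} (h : ∃ x : ℝ, 0 < x ∧ (∀ᵐ y : ℝ, y ∈ Ioi x → σ y = 1)) {X : ℝ}
    (hX : xA σ ≤ X) : ∀ᵐ x : ℝ, X < x → σ x = 1 := by
  have h1 : ∀ n : ℕ, ∀ᵐ x : ℝ, X + 1 / ((n : ℝ) + 1) < x → σ x = 1 := by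
    intro n
    have : xA σ < X + 1 / ((n : ℝ) + 1) := by
      have : (0:ℝ) < 1 / ((n : ℝ) + 1) := by positivity
      linarith
    obtain ⟨z, hz, hz'⟩ := exists_lt_of_csInf_lt h this
    filter_upwards [hz.2] with x hx hx' using hx (hz'.trans hx')
  filter_upwards [ae_all_iff.2 h1] with x hx hXx
  obtain ⟨n, hn⟩ := exists_nat_one_div_lt (sub_pos.2 hXx)
  exact hx n (by linarith)

lemma xA_le_max_of_agree {σ σ' : ℝ → ℝ} {ε : ℝ}
    (h : ∃ x : ℝ, 0 < x ∧ (∀ᵐ y : ℝ, y ∈ Ioi x → σ y = 1))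
    (he : ∀ x, ε ≤ x → σ' x = σ x) : xA σ' ≤ max (xA σ) ε := by
  by_contra! hlt
  obtain ⟨z, hz, hz'⟩ := exists_lt_of_csInf_lt h ((le_max_left _ _).trans_lt hlt)
  have : xA σ' ≤ max z ε := by
    refine csInf_le (NiceDensity.bddBelow_xA σ') ⟨lt_max_of_lt_left hz.1, ?_⟩
    filter_upwards [hz.2] with x hx hx'
    rw [he x ((le_max_right _ _).trans hx'.le)]
    exact hx ((le_max_left z ε).trans_lt hx')
  exact absurd (max_lt hz' ((le_max_right _ _).trans_lt hlt)) this.not_gt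

lemma max_xA_bump {σ σ₀ : ℝ → ℝ} {ε t : ℝ}
    (h : ∃ x : ℝ, 0 < x ∧ (∀ᵐ y : ℝ, y ∈ Ioi x → σ y = 1))
    (h' : ∃ x : ℝ, 0 < x ∧ (∀ᵐ y : ℝ, y ∈ Ioi x → bump σ t ε y = 1)) (hε : ε ≤ xA σ₀) :
    max (xA (bump σ t ε)) (xA σ₀) = max (xA σ) (xA σ₀) := by
  have he : ∀ x, ε ≤ x → bump σ t ε x = σ x := fun x hx =>
    bump_of_notMem fun hx' => hx'.2.not_ge hx
  have h1 := xA_le_max_of_agree h he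
  have h2 := xA_le_max_of_agree h' (fun x hx => (he x hx).symm)
  apply le_antisymm
  · exact max_le (h1.trans (max_le_max le_rfl hε)) (le_max_right _ _)
  · exact max_le (h2.trans (max_le_max le_rfl hε)) (le_max_right _ _)

namespace NiceDensity

variable {B X : ℝ} {σ : ℝ → ℝ}

lemma bump (h : NiceDensity B X σ) {t ε : ℝ} (hε : ε ≤ X)
    (ht : ∀ᵐ x : ℝ, x ∈ Ioo 0 ε → 0 ≤ σ x + t) : NiceDensity (B + |t|) X (bump σ t ε) where
  nonneg := by
    filter_upwards [h.nonneg, ht] with x h1 h2 hx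
    by_cases hm : x ∈ Ioo 0 ε
    · rw [bump_of_mem hm]; exact h2 hm
    · rw [bump_of_notMem hm]; exact h1 hx
  le_bound := by
    filter_upwards [h.le_bound] with x h1 hx
    by_cases hm : x ∈ Ioo 0 ε
    · rw [bump_of_mem hm]; linarith [h1 hx, le_abs_self t]
    · rw [bump_of_notMem hm]; linarith [h1 hx, abs_nonneg t]
  meas := h.meas.add (measurable_const.indicator measurableSet_Ioo).aemeasurable
  tail := by
    filter_upwards [h.tail] with x h1 hx
    rw [bump_of_notMem fun hm => (hm.2.trans_le hε).not_gt hx, h1 hx]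

lemma integrable_one_sub (h : NiceDensity B X σ) : IntegrableOn (fun x => 1 - σ x) (Ioi 0) :=
  h.integrableOn_comp_Ioi (g := fun r => 1 - r) (by fun_prop) (by norm_num)

lemma continuous_fEnt (β : ℝ) : Continuous (fEnt β) := by
  have : fEnt β = fun r => r * Real.log r - r * β + β := by funext r; simp [fEnt]; ring
  rw [this]
  have := Real.continuous_mul_log
  fun_prop

lemma integrable_fEnt (h : NiceDensity B X σ) (β : ℝ) :
    IntegrableOn (fun x => fEnt β (σ x)) (Ioi 0) :=
  h.integrableOn_comp_Ioi (continuous_fEnt β) (by simp [fEnt])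

lemma Mdiff_bump (h : NiceDensity B X σ) (σ₀ : ℝ → ℝ) {t ε : ℝ} (hε : 0 ≤ ε) :
    Mdiff (_root_.bump σ t ε) σ₀ = Mdiff σ σ₀ + t * ε := by
  have h1 : ∫ x in Ioi (0:ℝ), (1 - _root_.bump σ t ε x) =
      (∫ x in Ioi (0:ℝ), (1 - σ x)) - ∫ x in Ioi (0:ℝ), (Ioo 0 ε).indicator (fun _ => t) x := by
    rw [← integral_sub h.integrable_one_sub]
    · congr 1; funext x; simp only [_root_.bump]; ring
    · refine Integrable.integrableOn ?_
      rw [integrable_indicator_iff measurableSet_Ioo]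
      exact integrableOn_const (by simp)
  have h2 : ∫ x in Ioi (0:ℝ), (Ioo 0 ε).indicator (fun _ => t) x = t * ε := by
    rw [setIntegral_indicator measurableSet_Ioo, Set.inter_eq_right.2 Ioo_subset_Ioi_self]
    simp [hε, mul_comm]
  unfold Mdiff Mfun
  rw [h1, h2]; ring

lemma Mfun_eq (h : NiceDensity B X σ) {Λ : ℝ} (hΛ : 0 ≤ Λ) (ht : ∀ᵐ x : ℝ, Λ < x → σ x = 1) :
    Mfun σ = (∫ x in Ioc 0 Λ, σ x) - Λ := by
  have h1 : ∫ x in Ioi (0:ℝ), (1 - σ x) = ∫ x in Ioc 0 Λ, (1 - σ x) := by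
    refine setIntegral_eq_of_subset_of_ae_sdiff_eq_zero measurableSet_Ioi.nullMeasurableSet
      Ioc_subset_Ioi_self ?_
    filter_upwards [ht] with x hx hx'
    rw [hx (not_le.1 fun hle => hx'.2 ⟨hx'.1, hle⟩), sub_self]
  unfold Mfun
  have h2 : IntegrableOn σ (Ioc 0 Λ) := h.integrableOn_comp continuous_id Λ
  have h3 : IntegrableOn (fun _ => (1:ℝ)) (Ioc 0 Λ) := integrableOn_const (by simp)
  rw [h1, integral_sub h3 h2]
  simp [hΛ]

lemma densMeas_univ (h : NiceDensity B X σ) (Λ : ℝ) :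
    densMeas σ Λ univ = ENNReal.ofReal (∫ x in Ioc 0 Λ, σ x) := by
  unfold densMeas
  have h2 : IntegrableOn σ (Ioc 0 Λ) := h.integrableOn_comp continuous_id Λ
  rw [Measure.restrict_apply_univ, withDensity_apply _ measurableSet_Ioo,
    ofReal_integral_eq_lintegral_ofReal h2]
  · rw [setLIntegral_congr Ioo_ae_eq_Ioc]
  · filter_upwards [ae_restrict_of_ae h.nonneg, ae_restrict_mem measurableSet_Ioc] with x h1 hx
    exact h1 hx.1

lemma isFiniteMeasure_densMeas (h : NiceDensity B X σ) (Λ : ℝ) :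
    IsFiniteMeasure (densMeas σ Λ) := ⟨by rw [h.densMeas_univ]; exact ENNReal.ofReal_lt_top⟩

lemma isFiniteMeasure_nuMeas (h : NiceDensity B X σ) (σ₀ : ℝ → ℝ) :
    IsFiniteMeasure (nuMeas σ σ₀) := by
  have := h.isFiniteMeasure_densMeas (max (xA σ) (xA σ₀))
  have hd : IsFiniteMeasure (ENNReal.ofReal (Mdiff σ₀ σ) • Measure.dirac (0:ℝ)) := ⟨by simp⟩
  rw [nuMeas_eq]; infer_instance

lemma ae_nuMeas_mem (σ σ₀ : ℝ → ℝ) :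
    ∀ᵐ x ∂(nuMeas σ σ₀), x ∈ Icc 0 (max (xA σ) (xA σ₀)) := by
  rw [nuMeas_eq, ae_add_measure_iff]
  refine ⟨ae_densMeas_mem _ _, ?_⟩
  filter_upwards [ae_dirac_eq_zero _] with x hx
  rw [hx]; exact ⟨le_rfl, (xA_nonneg σ).trans (le_max_left _ _)⟩

variable {B₀ X₀ : ℝ} {σ₀ : ℝ → ℝ}

lemma nuMeas_univ_eq (h : NiceDensity B X σ) (h₀ : NiceDensity B₀ X₀ σ₀) (hX : 0 < X)
    (hX₀ : 0 < X₀) : nuMeas σ σ₀ univ = nuMeas σ₀ σ univ := by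
  have hΛ : 0 ≤ max (xA σ) (xA σ₀) := (xA_nonneg σ).trans (le_max_left _ _)
  rw [nuMeas_eq, nuMeas_eq, max_comm (xA σ₀), Measure.add_apply, Measure.add_apply, dirac_univ,
    dirac_univ, h.densMeas_univ, h₀.densMeas_univ]
  have e := h.Mfun_eq hΛ (tail_xA ⟨X, hX, h.tail⟩ (le_max_left _ _))
  have e₀ := h₀.Mfun_eq hΛ (tail_xA ⟨X₀, hX₀, h₀.tail⟩ (le_max_right _ _))
  unfold Mdiff
  rw [e, e₀]
  have p : 0 ≤ ∫ x in Ioc 0 (max (xA σ) (xA σ₀)), σ x := by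
    refine setIntegral_nonneg_of_ae_restrict ?_
    filter_upwards [ae_restrict_of_ae h.nonneg, ae_restrict_mem measurableSet_Ioc] with x h1 hx
    exact h1 hx.1
  have p₀ : 0 ≤ ∫ x in Ioc 0 (max (xA σ) (xA σ₀)), σ₀ x := by
    refine setIntegral_nonneg_of_ae_restrict ?_
    filter_upwards [ae_restrict_of_ae h₀.nonneg, ae_restrict_mem measurableSet_Ioc] with x h1 hx
    exact h1 hx.1
  generalize (∫ x in Ioc 0 (max (xA σ) (xA σ₀)), σ x) = a at *
  generalize (∫ x in Ioc 0 (max (xA σ) (xA σ₀)), σ₀ x) = b at *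
  rcases le_total a b with hab | hab
  · rw [ENNReal.ofReal_of_nonpos (p := a - _ - _) (by linarith), add_zero,
      ← ENNReal.ofReal_add p (by linarith)]
    congr 1; ring
  · rw [ENNReal.ofReal_of_nonpos (p := b - _ - _) (by linarith), add_zero,
      ← ENNReal.ofReal_add p₀ (by linarith)]
    congr 1; ring

/-- For bounded densities the only hypothesis needed to compare two squared Wasserstein
distances is a step between couplings. -/
lemma W2sq_le (h : NiceDensity B X σ) (h₀ : NiceDensity B₀ X₀ σ₀) (hX : 0 < X)
    (hX₀ : 0 < X₀) {σ' : ℝ → ℝ} {K : ℝ} (hK : 0 ≤ K)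
    (hstep : CouplingStep (nuMeas σ σ₀) (nuMeas σ₀ σ) (nuMeas σ' σ₀) (nuMeas σ₀ σ')
      (ENNReal.ofReal K)) : W2sq σ' σ₀ ≤ W2sq σ σ₀ + K := by
  have := h.isFiniteMeasure_nuMeas σ₀
  have := h₀.isFiniteMeasure_nuMeas σ
  refine W2sq_le_of_step hK hstep (exists_coupling (h.nuMeas_univ_eq h₀ hX hX₀)) ?_
  intro γ h1 h2
  have := isFiniteMeasure_of_fst h1
  have hx := ae_fst_of_eq h1 (ae_nuMeas_mem σ σ₀)
  have hy := ae_snd_of_le h2 le_rfl (ae_nuMeas_mem σ₀ σ)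
  rw [max_comm (xA σ₀)] at hy
  have hb := lintegral_le_add_const (γ := γ) (f := tcost) (g := fun _ => 0)
    (c := ENNReal.ofReal (max (xA σ) (xA σ₀) ^ 2)) (by
      filter_upwards [hx, hy] with p hx hy
      rw [zero_add]
      apply ENNReal.ofReal_le_ofReal
      rw [sq_le_sq, abs_of_nonneg (hx.1.trans hx.2), abs_le]
      constructor <;> linarith [hx.1, hx.2, hy.1, hy.2])
  rw [lintegral_zero, zero_add] at hb
  exact ne_top_of_le_ne_top (ENNReal.mul_ne_top ENNReal.ofReal_ne_top (measure_ne_top _ _)) hb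

end NiceDensity

/-! ### The effect of a perturbation near the fixed interface -/

section perturbation

variable {B X B₀ X₀ s ε : ℝ} {ρ ρ0 : ℝ → ℝ}

/-- The uniform mass of density `s` on `(0, ε)`. -/
def unifMeas (s ε : ℝ) : Measure ℝ := ENNReal.ofReal s • volume.restrict (Ioo 0 ε)

lemma unifMeas_univ (hs : 0 ≤ s) : unifMeas s ε univ = ENNReal.ofReal (s * ε) := by
  simp [unifMeas, ENNReal.ofReal_mul hs]

instance : IsFiniteMeasure (unifMeas s ε) := ⟨by simp [unifMeas, ENNReal.mul_lt_top]⟩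

lemma ae_unifMeas_mem : ∀ᵐ x ∂(unifMeas s ε), x ∈ Icc 0 ε := by
  refine Measure.ae_smul_measure ?_ _
  filter_upwards [ae_restrict_mem measurableSet_Ioo] with x hx using Ioo_subset_Icc_self hx

lemma Mdiff_comm (ρ ρ0 : ℝ → ℝ) : Mdiff ρ0 ρ = -Mdiff ρ ρ0 := by
  unfold Mdiff; ring

lemma ofReal_dirac_add {a b : ℝ} (ha : 0 ≤ a) (hb : 0 ≤ b) :
    ENNReal.ofReal (a + b) • Measure.dirac (0:ℝ) =
      ENNReal.ofReal a • Measure.dirac (0:ℝ) + ENNReal.ofReal b • Measure.dirac (0:ℝ) := by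
  rw [ENNReal.ofReal_add ha hb, add_smul]

lemma isFiniteMeasure_ofReal_dirac (a : ℝ) :
    IsFiniteMeasure (ENNReal.ofReal a • Measure.dirac (0:ℝ)) := ⟨by simp⟩

/-- Adding the density `s` on `(0, ε)` costs at most `2 ε Λ` per unit of mass: the added mass
comes from the reservoir at `0`. -/
lemma W2sq_bump_add (h : NiceDensity B X ρ) (h₀ : NiceDensity B₀ X₀ ρ0) (hX : 0 < X)
    (hX₀ : 0 < X₀) (hs : 0 < s) (hε : 0 < ε) (hεX : ε ≤ X) (hε₀ : ε ≤ xA ρ0)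
    (hM : 0 ≤ Mdiff ρ ρ0 ∨ Mdiff ρ ρ0 + s * ε ≤ 0) :
    W2sq (bump ρ s ε) ρ0 ≤ W2sq ρ ρ0 + 2 * ε * max (xA ρ) (xA ρ0) * (s * ε) := by
  have hσ : NiceDensity (B + |s|) X (bump ρ s ε) := h.bump hεX (by
    filter_upwards [h.nonneg] with x hx hx'
    linarith [hx hx'.1])
  have hΛ' := max_xA_bump (t := s) (σ := ρ) (σ₀ := ρ0) ⟨X, hX, h.tail⟩ ⟨X, hX, hσ.tail⟩ hε₀
  have hεΛ : ε ≤ max (xA ρ) (xA ρ0) := hε₀.trans (le_max_right _ _)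
  have hΛ0 : 0 ≤ max (xA ρ) (xA ρ0) := hε.le.trans hεΛ
  have hsε : 0 < s * ε := mul_pos hs hε
  have hMσ := h.Mdiff_bump ρ0 (t := s) hε.le
  have hdens : densMeas (bump ρ s ε) (max (xA ρ) (xA ρ0)) =
    densMeas ρ (max (xA ρ) (xA ρ0)) + unifMeas s ε := densMeas_bump h.nonneg hs.le hεΛ
  have hfd := h.isFiniteMeasure_densMeas (max (xA ρ) (xA ρ0))
  have hu : unifMeas s ε univ = ENNReal.ofReal (s * ε) := unifMeas_univ hs.le
  refine h.W2sq_le h₀ hX hX₀ (by positivity) ?_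
  rw [ENNReal.ofReal_mul (by positivity), ← hu]
  rcases hM with hM | hM
  · have e1 : nuMeas (bump ρ s ε) ρ0 = nuMeas ρ ρ0 + unifMeas s ε := by
      rw [nuMeas_eq, nuMeas_eq, hΛ', hdens, Mdiff_comm _ ρ0, Mdiff_comm _ ρ0, hMσ,
        ENNReal.ofReal_of_nonpos (by linarith), ENNReal.ofReal_of_nonpos (by linarith)]
      simp
    have e2 : nuMeas ρ0 (bump ρ s ε) = nuMeas ρ0 ρ + unifMeas s ε univ • Measure.dirac 0 := by
      rw [nuMeas_eq, nuMeas_eq, max_comm, hΛ', max_comm, hMσ, ofReal_dirac_add hM hsε.le, hu,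
        add_assoc]
    rw [e1, e2]
    exact step_add_nonneg hεΛ ae_unifMeas_mem
  · have hfi := isFiniteMeasure_ofReal_dirac (-(Mdiff ρ ρ0 + s * ε))
    have e0 : nuMeas ρ ρ0 = (densMeas ρ (max (xA ρ) (xA ρ0)) +
        ENNReal.ofReal (-(Mdiff ρ ρ0 + s * ε)) • Measure.dirac 0) +
          unifMeas s ε univ • Measure.dirac 0 := by
      rw [nuMeas_eq, Mdiff_comm _ ρ0, hu, add_assoc, ← ofReal_dirac_add (by linarith) hsε.le]
      congr 3; ring
    have e1 : nuMeas (bump ρ s ε) ρ0 = (densMeas ρ (max (xA ρ) (xA ρ0)) +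
        ENNReal.ofReal (-(Mdiff ρ ρ0 + s * ε)) • Measure.dirac 0) + unifMeas s ε := by
      rw [nuMeas_eq, hΛ', hdens, Mdiff_comm _ ρ0, hMσ]
      abel
    have e2 : nuMeas ρ0 (bump ρ s ε) = nuMeas ρ0 ρ := by
      rw [nuMeas_eq, nuMeas_eq, max_comm, hΛ', max_comm, hMσ,
        ENNReal.ofReal_of_nonpos (p := Mdiff ρ ρ0 + _) (by linarith),
        ENNReal.ofReal_of_nonpos (p := Mdiff ρ ρ0) (by linarith)]
    have hsupp := NiceDensity.ae_nuMeas_mem ρ0 ρ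
    rw [max_comm] at hsupp
    rw [e0, e1, e2]
    exact step_add_neg hεΛ ae_unifMeas_mem hsupp

/-- Removing the density `s` on `(0, ε)` costs at most `2 ε Λ` per unit of mass: the removed
mass goes to the reservoir at `0`. -/
lemma W2sq_bump_remove (h : NiceDensity B X ρ) (h₀ : NiceDensity B₀ X₀ ρ0) (hX : 0 < X)
    (hX₀ : 0 < X₀) (hs : 0 < s) (hε : 0 < ε) (hεX : ε ≤ X) (hε₀ : ε ≤ xA ρ0)
    (hρ : ∀ᵐ x : ℝ, x ∈ Ioo 0 ε → 2 * s ≤ ρ x)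
    (hM : Mdiff ρ ρ0 ≤ 0 ∨ 2 * (s * ε) ≤ Mdiff ρ ρ0) :
    W2sq (bump ρ (-s) ε) ρ0 ≤ W2sq ρ ρ0 + 2 * ε * max (xA ρ) (xA ρ0) * (s * ε) := by
  have hσ : NiceDensity (B + |-s|) X (bump ρ (-s) ε) := h.bump hεX (by
    filter_upwards [hρ] with x hx hx'
    linarith [hx hx'])
  have hσ' : NiceDensity (B + |-s| + |-s|) X (bump (bump ρ (-s) ε) (-s) ε) := hσ.bump hεX (by
    filter_upwards [hρ] with x hx hx'
    rw [bump_of_mem hx']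
    linarith [hx hx'])
  have hΛ' := max_xA_bump (t := -s) (σ := ρ) (σ₀ := ρ0) ⟨X, hX, h.tail⟩ ⟨X, hX, hσ.tail⟩ hε₀
  have hεΛ : ε ≤ max (xA ρ) (xA ρ0) := hε₀.trans (le_max_right _ _)
  have hΛ0 : 0 ≤ max (xA ρ) (xA ρ0) := hε.le.trans hεΛ
  have hsε : 0 < s * ε := mul_pos hs hε
  have hMσ := h.Mdiff_bump ρ0 (t := -s) hε.le
  have hdens : densMeas ρ (max (xA ρ) (xA ρ0)) =
      densMeas (bump ρ (-s) ε) (max (xA ρ) (xA ρ0)) + unifMeas s ε := by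
    have := densMeas_bump (s := s) hσ.nonneg hs.le hεΛ
    rwa [bump_bump_neg] at this
  have hdens' : unifMeas s ε ≤ densMeas (bump ρ (-s) ε) (max (xA ρ) (xA ρ0)) := by
    have := densMeas_bump (s := s) hσ'.nonneg hs.le hεΛ
    rw [bump_bump_neg] at this
    rw [this]
    exact Measure.le_add_left le_rfl
  have hfd := hσ.isFiniteMeasure_densMeas (max (xA ρ) (xA ρ0))
  have hu : unifMeas s ε univ = ENNReal.ofReal (s * ε) := unifMeas_univ hs.le
  refine h.W2sq_le h₀ hX hX₀ (by positivity) ?_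
  rw [ENNReal.ofReal_mul (by positivity), ← hu]
  rcases hM with hM | hM
  · have hfi := isFiniteMeasure_ofReal_dirac (-Mdiff ρ ρ0)
    have e0 : nuMeas ρ ρ0 = (densMeas (bump ρ (-s) ε) (max (xA ρ) (xA ρ0)) +
        ENNReal.ofReal (-Mdiff ρ ρ0) • Measure.dirac 0) + unifMeas s ε := by
      rw [nuMeas_eq, Mdiff_comm _ ρ0, hdens]
      abel
    have e1 : nuMeas (bump ρ (-s) ε) ρ0 = (densMeas (bump ρ (-s) ε) (max (xA ρ) (xA ρ0)) +
        ENNReal.ofReal (-Mdiff ρ ρ0) • Measure.dirac 0) +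
          unifMeas s ε univ • Measure.dirac 0 := by
      rw [nuMeas_eq, hΛ', Mdiff_comm _ ρ0, hMσ, hu, add_assoc,
        ← ofReal_dirac_add (by linarith) hsε.le]
      congr 3; ring
    have e2 : nuMeas ρ0 (bump ρ (-s) ε) = nuMeas ρ0 ρ := by
      rw [nuMeas_eq, nuMeas_eq, max_comm, hΛ', max_comm, hMσ,
        ENNReal.ofReal_of_nonpos (p := Mdiff ρ ρ0 + _) (by linarith),
        ENNReal.ofReal_of_nonpos (p := Mdiff ρ ρ0) (by linarith)]
    have hsupp := NiceDensity.ae_nuMeas_mem ρ0 ρ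
    rw [max_comm] at hsupp
    rw [e0, e1, e2]
    exact step_remove_nonpos ae_unifMeas_mem hsupp
  · have hfi := hσ.isFiniteMeasure_nuMeas ρ0
    have e0 : nuMeas ρ ρ0 = nuMeas (bump ρ (-s) ε) ρ0 + unifMeas s ε := by
      rw [nuMeas_eq, nuMeas_eq, hΛ', hdens, Mdiff_comm _ ρ0, Mdiff_comm _ ρ0, hMσ,
        ENNReal.ofReal_of_nonpos (by linarith), ENNReal.ofReal_of_nonpos (by linarith)]
      simp
    have e2 : nuMeas ρ0 ρ =
        nuMeas ρ0 (bump ρ (-s) ε) + unifMeas s ε univ • Measure.dirac 0 := by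
      rw [nuMeas_eq, nuMeas_eq, max_comm _ (xA (bump ρ (-s) ε)), hΛ', max_comm, hMσ, hu,
        add_assoc, ← ofReal_dirac_add (by linarith) hsε.le]
      congr 3; ring
    have hsupp := NiceDensity.ae_nuMeas_mem ρ0 (bump ρ (-s) ε)
    have hsupp' := NiceDensity.ae_nuMeas_mem (bump ρ (-s) ε) ρ0
    rw [max_comm, hΛ'] at hsupp
    rw [hΛ'] at hsupp'
    rw [e0, e2]
    refine step_remove_pos ae_unifMeas_mem ?_ ?_ hsupp' hsupp hεΛ hΛ0
    · rw [nuMeas_eq, hΛ']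
      exact hdens'.trans (Measure.le_add_right le_rfl)
    · rw [nuMeas_eq, hMσ, hu,
        show Mdiff ρ ρ0 + -s * ε = (Mdiff ρ ρ0 - 2 * (s * ε)) + s * ε by ring,
        ofReal_dirac_add (by linarith) hsε.le, ← add_assoc]
      exact Measure.le_add_left le_rfl

/-- Comparison of the minimizer with `bump ρ t ε`, where `W` bounds the increase of the squared
distance and `u` the pointwise increase of the entropy. -/
lemma energy_comparison {lam α β θ τ Kτ mτ X0 t u W : ℝ} (h : NiceDensity B X ρ) (hX : 0 < X)
    (hmin : IsJKOMin lam α β θ τ Kτ mτ X0 ρ0 X ρ) (hτ : 0 < τ) (hε : 0 < ε) (hεX : ε ≤ X)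
    (ht : ∀ᵐ x : ℝ, x ∈ Ioo 0 ε → 0 ≤ ρ x + t)
    (hu : ∀ᵐ x : ℝ, x ∈ Ioo 0 ε → fEnt β (ρ x + t) - fEnt β (ρ x) ≤ u)
    (hW : W2sq (bump ρ t ε) ρ0 ≤ W2sq ρ ρ0 + W) :
    0 ≤ W / (2 * τ) + u * ε + θ * (|Mdiff ρ ρ0 + t * ε| - |Mdiff ρ ρ0|)
      + (ptau Kτ mτ (Mdiff ρ ρ0 + t * ε) - ptau Kτ mτ (Mdiff ρ ρ0)) := by
  have hσ : NiceDensity (B + |t|) X (bump ρ t ε) := h.bump hεX ht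
  have hJ := hmin.2 X _ (hσ.memAdmSet hX)
  unfold Jfun dsq Efun at hJ
  rw [h.Mdiff_bump ρ0 hε.le] at hJ
  have hint : (∫ x in Ioi (0:ℝ), fEnt β (bump ρ t ε x)) - ∫ x in Ioi (0:ℝ), fEnt β (ρ x)
      ≤ u * ε := by
    rw [← integral_sub (hσ.integrable_fEnt β) (h.integrable_fEnt β)]
    have hi : IntegrableOn ((Ioo 0 ε).indicator (fun _ => u)) (Ioi (0:ℝ)) := by
      refine Integrable.integrableOn ?_
      rw [integrable_indicator_iff measurableSet_Ioo]
      exact integrableOn_const (by simp)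
    have h2 : ∫ x in Ioi (0:ℝ), (Ioo 0 ε).indicator (fun _ => u) x = u * ε := by
      rw [setIntegral_indicator measurableSet_Ioo, Set.inter_eq_right.2 Ioo_subset_Ioi_self]
      simp [hε.le, mul_comm]
    rw [← h2]
    refine integral_mono_ae ((hσ.integrable_fEnt β).sub (h.integrable_fEnt β)) hi ?_
    filter_upwards [ae_restrict_of_ae hu] with x hx
    by_cases hm : x ∈ Ioo 0 ε
    · simp only [bump_of_mem hm, indicator_of_mem hm]; exact hx hm
    · simp only [bump_of_notMem hm, indicator_of_notMem hm, sub_self, le_refl]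
  have hdiv : (W2sq (bump ρ t ε) ρ0 + lam * (X - X0) ^ 2) / (2 * τ) ≤
      (W2sq ρ ρ0 + lam * (X - X0) ^ 2) / (2 * τ) + W / (2 * τ) := by
    rw [← add_div]
    exact div_le_div_of_nonneg_right (by linarith) (by positivity)
  linarith

end perturbation

/-! ### One-sided bounds for the boundary value -/

/-- The tangent line inequality for the convex function `fEnt β`. -/
lemma fEnt_sub_le (β : ℝ) {a b : ℝ} (ha : 0 ≤ a) (hb : 0 < b) :
    fEnt β b - fEnt β a ≤ (b - a) * (Real.log b + 1 - β) := by
  have key : a * (Real.log b - Real.log a) ≤ b - a := by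
    rcases ha.eq_or_lt with rfl | ha
    · simpa using hb.le
    · rw [← Real.log_div hb.ne' ha.ne']
      have := mul_le_mul_of_nonneg_left (Real.log_le_sub_one_of_pos (div_pos hb ha)) ha.le
      rwa [mul_sub, mul_div_cancel₀ _ ha.ne', mul_one] at this
  unfold fEnt
  nlinarith

lemma ptau_add_le {Kτ : ℝ} (hK : 0 < Kτ) (mτ m h : ℝ) :
    ptau Kτ mτ (m + h) - ptau Kτ mτ m ≤ -(Kτ * max (-m - mτ) 0) * h + Kτ / 2 * h ^ 2 := by
  unfold ptau
  have hsq : (max (-(m + h) - mτ) 0) ^ 2 ≤ (max (-m - mτ) 0 - h) ^ 2 := by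
    rcases le_total (-(m + h) - mτ) 0 with h1 | h1
    · rw [max_eq_right h1]; simpa using sq_nonneg _
    · rw [max_eq_left h1]
      apply pow_le_pow_left₀ h1
      linarith [le_max_left (-m - mτ) 0]
  nlinarith [mul_le_mul_of_nonneg_left hsq (half_pos hK).le]

lemma nonneg_of_forall_small {C L ε₀ : ℝ} (hε₀ : 0 < ε₀)
    (h : ∀ ε, 0 < ε → ε < ε₀ → 0 ≤ C * ε + L) : 0 ≤ L := by
  have ht : Tendsto (fun ε : ℝ => C * ε + L) (𝓝[>] 0) (𝓝 L) := by
    have : Tendsto (fun ε : ℝ => C * ε + L) (𝓝 0) (𝓝 (C * 0 + L)) :=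
      Continuous.tendsto (by fun_prop) 0
    rw [mul_zero, zero_add] at this
    exact this.mono_left nhdsWithin_le_nhds
  refine ge_of_tendsto ht ?_
  filter_upwards [Ioo_mem_nhdsGT hε₀] with ε hε using h ε hε.1 hε.2

/-- Near `0` the density is uniformly close to the value of its continuous representative. -/
lemma ContRep.ae_near {X : ℝ} {ρ ρb : ℝ → ℝ} (hX : 0 < X) (h : ContRep X ρ ρb) {s : ℝ}
    (hs : 0 < s) : ∃ ε₀ > 0, ∀ᵐ x : ℝ, x ∈ Ioo 0 ε₀ → |ρ x - ρb 0| < s := by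
  obtain ⟨δ, hδ, hδ'⟩ := Metric.continuousWithinAt_iff.1 (h.1 0 ⟨le_rfl, hX.le⟩) s hs
  refine ⟨min δ X, lt_min hδ hX, ?_⟩
  filter_upwards [h.2] with x hx hm
  have hxX := hm.2.trans_le (min_le_right _ _)
  rw [hx ⟨hm.1, hxX⟩, ← Real.dist_eq]
  refine hδ' ⟨hm.1.le, hxX.le⟩ ?_
  rw [Real.dist_eq, sub_zero, abs_of_pos hm.1]
  exact hm.2.trans_le (min_le_left _ _)

section bounds

variable {B X B₀ X₀ : ℝ} {ρ ρ0 ρb : ℝ → ℝ} {lam α β θ τ Kτ mτ X0 d : ℝ}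

/-- Adding mass near `0` bounds the boundary value from below; `d` bounds the difference quotients
of the absolute value to the right of `M(ρ, ρ⁰)`. -/
lemma boundary_lower (h : NiceDensity B X ρ) (h₀ : NiceDensity B₀ X₀ ρ0) (hX : 0 < X)
    (hX₀ : 0 < X₀) (hpos : 0 < xA ρ0) (hθ : 0 < θ) (hτ : 0 < τ) (hK : 0 < Kτ)
    (hmin : IsJKOMin lam α β θ τ Kτ mτ X0 ρ0 X ρ) (hrep : ContRep X ρ ρb)
    (hd : ∃ δ > 0, ∀ m, 0 < m → m < δ → |Mdiff ρ ρ0 + m| - |Mdiff ρ ρ0| ≤ d * m) :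
    Real.exp (β - 1 - (θ * d - Kτ * max (-(Mdiff ρ ρ0) - mτ) 0)) ≤ ρb 0 := by
  set M := Mdiff ρ ρ0 with hMdef
  obtain ⟨δ, hδ, hd⟩ := hd
  refine le_of_forall_pos_le_add fun η hη => ?_
  obtain ⟨s, hs, rfl⟩ : ∃ s : ℝ, 0 < s ∧ η = 2 * s := ⟨η / 2, by linarith, by ring⟩
  obtain ⟨ε₁, hε₁, hnear⟩ := hrep.ae_near hX hs
  -- The sign alternative for the transport estimate holds once the added mass is small.
  obtain ⟨δ', hδ', hM⟩ : ∃ δ' > 0, ∀ m, 0 < m → m < δ' → 0 ≤ M ∨ M + m ≤ 0 := by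
    rcases le_or_gt 0 M with h0 | h0
    · exact ⟨1, one_pos, fun _ _ _ => Or.inl h0⟩
    · exact ⟨-M, by linarith, fun m _ hm => Or.inr (by linarith)⟩
  set R := ρb 0 with hR
  set ε₀ := min (min ε₁ (min X (xA ρ0))) (min (δ / s) (δ' / s)) with hε₀
  have hε₀p : 0 < ε₀ := by positivity
  have hineq : ∀ ε, 0 < ε → ε < ε₀ → 0 ≤ (max (xA ρ) (xA ρ0) / τ + Kτ / 2 * s) * ε +
      (Real.log (R + 2 * s) + 1 - β + (θ * d - Kτ * max (-M - mτ) 0)) := by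
    intro ε hε hlt
    simp only [hε₀, lt_min_iff] at hlt
    obtain ⟨⟨l1, l2, l3⟩, l4, l5⟩ := hlt
    rw [lt_div_iff₀ hs, mul_comm] at l4 l5
    have hsε : 0 < s * ε := mul_pos hs hε
    have hW := W2sq_bump_add h h₀ hX hX₀ hs hε l2.le l3.le (hM _ hsε l5)
    have hE := energy_comparison (u := s * (Real.log (R + 2 * s) + 1 - β)) h hX hmin hτ hε l2.le
      (by filter_upwards [h.nonneg] with x hx hx'; linarith [hx hx'.1])
      (by
        filter_upwards [h.nonneg, hnear] with x hx hn hx'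
        have hρ := hx hx'.1
        have hn := abs_lt.1 (hn ⟨hx'.1, hx'.2.trans l1⟩)
        refine (fEnt_sub_le β hρ (by linarith)).trans ?_
        rw [add_sub_cancel_left]
        have : Real.log (ρ x + s) ≤ Real.log (R + 2 * s) :=
          Real.log_le_log (by linarith) (by linarith)
        gcongr) hW
    have hp := ptau_add_le hK mτ M (s * ε)
    have hab := mul_le_mul_of_nonneg_left (hd _ hsε l4) hθ.le
    have hdiv : 2 * ε * max (xA ρ) (xA ρ0) * (s * ε) / (2 * τ) =
        s * ε * (max (xA ρ) (xA ρ0) / τ * ε) := by field_simp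
    rw [hdiv] at hE
    refine (mul_nonneg_iff_of_pos_left hsε).1 ?_
    nlinarith
  have hL := nonneg_of_forall_small hε₀p hineq
  have hRs : 0 < R + 2 * s := by
    have hne : (volume.restrict (Ioo 0 (min ε₁ X))) ≠ 0 := by
      simp [hε₁, hX]
    have : (ae (volume.restrict (Ioo 0 (min ε₁ X)))).NeBot := ae_neBot.2 hne
    obtain ⟨x, hx, hn, hx'⟩ := ((ae_restrict_of_ae (s := Ioo 0 (min ε₁ X)) h.nonneg).and
      ((ae_restrict_of_ae hnear).and (ae_restrict_mem measurableSet_Ioo))).exists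
    have hn := abs_lt.1 (hn ⟨hx'.1, hx'.2.trans_le (min_le_left _ _)⟩)
    linarith [hx hx'.1]
  rw [← Real.le_log_iff_exp_le hRs]
  linarith

/-- Removing mass near `0` bounds the boundary value from above; `d` bounds from below the
difference quotients of the absolute value to the left of `M(ρ, ρ⁰)`. -/
lemma boundary_upper (h : NiceDensity B X ρ) (h₀ : NiceDensity B₀ X₀ ρ0) (hX : 0 < X)
    (hX₀ : 0 < X₀) (hpos : 0 < xA ρ0) (hθ : 0 < θ) (hτ : 0 < τ) (hK : 0 < Kτ)
    (hmin : IsJKOMin lam α β θ τ Kτ mτ X0 ρ0 X ρ) (hrep : ContRep X ρ ρb)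
    (hd : ∃ δ > 0, ∀ m, 0 < m → m < δ → |Mdiff ρ ρ0 - m| - |Mdiff ρ ρ0| ≤ -(d * m)) :
    ρb 0 ≤ Real.exp (β - 1 - (θ * d - Kτ * max (-(Mdiff ρ ρ0) - mτ) 0)) := by
  set M := Mdiff ρ ρ0 with hMdef
  obtain ⟨δ, hδ, hd⟩ := hd
  set E := Real.exp (β - 1 - (θ * d - Kτ * max (-M - mτ) 0)) with hE'
  have hEpos : 0 < E := Real.exp_pos _
  set R := ρb 0 with hR
  by_contra! hRE
  -- Small enough that `R - 2 s` is still above `E`, and that `ρ ≥ 2 s` near `0`.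
  obtain ⟨s, hs, hs4, hsE⟩ : ∃ s : ℝ, 0 < s ∧ 4 * s ≤ R ∧ E < R - 2 * s :=
    ⟨(R - E) / 4, by linarith, by linarith, by linarith⟩
  obtain ⟨ε₁, hε₁, hnear⟩ := hrep.ae_near hX hs
  obtain ⟨δ', hδ', hM⟩ : ∃ δ' > 0, ∀ m, 0 < m → m < δ' → M ≤ 0 ∨ 2 * m ≤ M := by
    rcases le_or_gt M 0 with h0 | h0
    · exact ⟨1, one_pos, fun _ _ _ => Or.inl h0⟩
    · exact ⟨M / 2, by linarith, fun m _ hm => Or.inr (by linarith)⟩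
  set ε₀ := min (min ε₁ (min X (xA ρ0))) (min (δ / s) (δ' / s)) with hε₀
  have hε₀p : 0 < ε₀ := by positivity
  have hineq : ∀ ε, 0 < ε → ε < ε₀ → 0 ≤ (max (xA ρ) (xA ρ0) / τ + Kτ / 2 * s) * ε +
      (-(Real.log (R - 2 * s) + 1 - β) - (θ * d - Kτ * max (-M - mτ) 0)) := by
    intro ε hε hlt
    simp only [hε₀, lt_min_iff] at hlt
    obtain ⟨⟨l1, l2, l3⟩, l4, l5⟩ := hlt
    rw [lt_div_iff₀ hs, mul_comm] at l4 l5
    have hsε : 0 < s * ε := mul_pos hs hε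
    have hlow : ∀ᵐ x : ℝ, x ∈ Ioo 0 ε → R - s ≤ ρ x := by
      filter_upwards [hnear] with x hn hx'
      have hn := abs_lt.1 (hn ⟨hx'.1, hx'.2.trans l1⟩)
      linarith
    have hW := W2sq_bump_remove h h₀ hX hX₀ hs hε l2.le l3.le
      (by filter_upwards [hlow] with x hx hx'; linarith [hx hx']) (hM _ hsε l5)
    have hE := energy_comparison (u := -s * (Real.log (R - 2 * s) + 1 - β)) h hX hmin hτ hε l2.le
      (by filter_upwards [hlow] with x hx hx'; linarith [hx hx'])
      (by
        filter_upwards [hlow] with x hx hx'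
        have hρ := hx hx'
        refine (fEnt_sub_le β (by linarith) (by linarith)).trans ?_
        rw [add_sub_cancel_left]
        have : Real.log (R - 2 * s) ≤ Real.log (ρ x + -s) :=
          Real.log_le_log (by linarith) (by linarith)
        nlinarith) hW
    have hp := ptau_add_le hK mτ M (-s * ε)
    have hab := mul_le_mul_of_nonneg_left (hd _ hsε l4) hθ.le
    have hM' : M + -s * ε = M - s * ε := by ring
    have hdiv : 2 * ε * max (xA ρ) (xA ρ0) * (s * ε) / (2 * τ) =
        s * ε * (max (xA ρ) (xA ρ0) / τ * ε) := by field_simp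
    rw [← hMdef, hdiv, hM'] at hE
    rw [hM'] at hp
    refine (mul_nonneg_iff_of_pos_left hsε).1 ?_
    nlinarith
  have hL := nonneg_of_forall_small hε₀p hineq
  have hlog : Real.log (R - 2 * s) ≤ β - 1 - (θ * d - Kτ * max (-M - mτ) 0) := by linarith
  have := (Real.log_le_iff_le_exp (by linarith)).1 hlog
  linarith

end bounds

/-! ### Boundedness of the minimizer and of the initial density -/

lemma aemeasurable_Ioi_of_tail {X : ℝ} {σ : ℝ → ℝ}
    (h : AEMeasurable σ (volume.restrict (Ioc 0 X))) (ht : ∀ᵐ x : ℝ, X < x → σ x = 1) :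
    AEMeasurable σ (volume.restrict (Ioi 0)) := by
  have h2 : AEMeasurable σ (volume.restrict (Ioi X)) := by
    refine (aemeasurable_const (b := (1:ℝ))).congr ?_
    filter_upwards [ae_restrict_of_ae ht, ae_restrict_mem measurableSet_Ioi] with x hx hx'
    exact (hx hx').symm
  refine (aemeasurable_union_iff.2 ⟨h, h2⟩).mono_set ?_
  intro x hx
  rcases le_or_gt x X with h | h
  · exact Or.inl ⟨hx, h⟩
  · exact Or.inr h

lemma H2.continuousOn {β θ X0 ρmin ρmax : ℝ} {ρ0 ρ0' : ℝ → ℝ} (h : H2 β θ X0 ρmin ρmax ρ0 ρ0') :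
    ContinuousOn ρ0 (Icc 0 X0) := fun x hx => (h.2.2.1 x hx).continuousWithinAt

lemma H2.niceDensity {β θ X0 ρmin ρmax : ℝ} {ρ0 ρ0' : ℝ → ℝ} (h : H2 β θ X0 ρmin ρmax ρ0 ρ0') :
    NiceDensity 1 X0 ρ0 := by
  have hc := h.continuousOn
  obtain ⟨h1, h2, h3, h4, h5, h6, h7, h8, h9⟩ := h
  refine ⟨Eventually.of_forall fun x _ => (h2 x).le, Eventually.of_forall fun x hx => ?_, ?_,
    Eventually.of_forall h5⟩
  · rcases le_or_gt x X0 with h | h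
    · exact (h8 x ⟨hx, h⟩).2.trans h9
    · exact (h5 x h).le
  · refine aemeasurable_Ioi_of_tail ?_ (Eventually.of_forall h5)
    exact (hc.mono Ioc_subset_Icc_self).aemeasurable measurableSet_Ioc

/-- Since `ρ⁰(0) ≤ ρ₊ < 1`, the initial density is not `1` near `0`. -/
lemma H2.xA_pos {β θ X0 ρmin ρmax : ℝ} {ρ0 ρ0' : ℝ → ℝ} (h : H2 β θ X0 ρmin ρmax ρ0 ρ0')
    (hβθ : β + θ < 1) : 0 < xA ρ0 := by
  have hc := h.continuousOn
  have htail := tail_xA (σ := ρ0) ⟨X0, h.1, h.niceDensity.tail⟩ le_rfl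
  by_contra! hle
  have h0 : ρ0 0 < 1 := by
    refine h.2.2.2.2.2.1.2.trans_lt ?_
    rw [rhoPlus, Real.exp_lt_one_iff]; linarith
  have hev : ∀ᶠ x in 𝓝[Icc 0 X0] 0, ρ0 x < 1 :=
    (hc 0 ⟨le_rfl, h.1.le⟩).eventually (gt_mem_nhds h0)
  obtain ⟨δ, hδ, hδ'⟩ := Metric.mem_nhdsWithin_iff.1 hev
  have hne : (volume.restrict (Ioo 0 (min δ X0))) ≠ 0 := by simp [hδ, h.1]
  have : (ae (volume.restrict (Ioo 0 (min δ X0)))).NeBot := ae_neBot.2 hne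
  obtain ⟨x, hx, hx'⟩ := ((ae_restrict_of_ae (s := Ioo 0 (min δ X0)) htail).and
    (ae_restrict_mem measurableSet_Ioo)).exists
  have h1 : ρ0 x < 1 := hδ' ⟨by
    rw [Metric.mem_ball, Real.dist_eq, sub_zero, abs_of_pos hx'.1]
    exact hx'.2.trans_le (min_le_left _ _), hx'.1.le, (hx'.2.trans_le (min_le_right _ _)).le⟩
  exact h1.ne (hx (hle.trans_lt hx'.1))

lemma ContRep.niceDensity {X : ℝ} {ρ ρb : ℝ → ℝ} (hrep : ContRep X ρ ρb)
    (hadm : MemAdmSet X ρ) : ∃ B, NiceDensity B X ρ := by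
  obtain ⟨⟨hnn, -, -, hex⟩, hxA⟩ := hadm
  obtain ⟨hc, hae⟩ := hrep
  have htail := tail_xA hex hxA
  obtain ⟨C, hC⟩ := isCompact_Icc.exists_bound_of_continuousOn hc
  have hneX : ∀ᵐ x : ℝ, x ≠ X := by simp [ae_iff]
  refine ⟨max C 1, hnn, ?_, ?_, htail⟩
  · filter_upwards [hae, htail, hneX] with x h1 h2 h3 hx
    rcases lt_or_gt_of_ne h3 with h | h
    · rw [h1 ⟨hx, h⟩]
      exact (le_abs_self _).trans ((hC x ⟨hx.le, h.le⟩).trans (le_max_left _ _))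
    · rw [h2 h]; exact le_max_right _ _
  · refine aemeasurable_Ioi_of_tail ?_ htail
    refine ((hc.mono Ioc_subset_Icc_self).aemeasurable measurableSet_Ioc).congr ?_
    filter_upwards [ae_restrict_of_ae hae, ae_restrict_of_ae hneX,
      ae_restrict_mem measurableSet_Ioc] with x h1 h2 hx
    exact (h1 ⟨hx.1, lt_of_le_of_ne hx.2 h2⟩).symm

/-- Proposition 3.4, behavior at the fixed interface. Let `(X, ρ)`
be a minimizer of the JKO functional with `X ≥ X⁰`, set `M := M(ρ, ρ⁰)` and let `ρ̄`
be the continuous representative of `ρ` on `[0,X]`. Then: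
`M < 0 ⟹ ρ̄(0) = ρ₊ exp(−p_τ'(M))` with `p_τ'(m) = −K_τ(−m−m_τ)₊`;
`M > 0 ⟹ ρ̄(0) = ρ₋`; and `M = 0 ⟹ ρ₋ ≤ ρ̄(0) ≤ ρ₊`. -/
theorem boundary_value_at_fixed_interface
    (lam α β θ T X0 ρmin ρmax τ mτ Kτ : ℝ) (ρ0 ρ0' : ℝ → ℝ)
    (hlam : 0 < lam) (hα : 0 < α) (hθ : 0 < θ) (hβθ : β + θ < 1) (hT : 0 < T)
    (hH2 : H2 β θ X0 ρmin ρmax ρ0 ρ0')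
    (hτ0 : 0 < τ) (hτ1 : τ < 1) (hmτ : 0 < mτ) (hKτ : 0 < Kτ)
    (X : ℝ) (ρ ρb : ℝ → ℝ)
    (hmin : IsJKOMin lam α β θ τ Kτ mτ X0 ρ0 X ρ) (hXX0 : X0 ≤ X)
    (hrep : ContRep X ρ ρb) :
    (Mdiff ρ ρ0 < 0 →
      ρb 0 = rhoPlus β θ * Real.exp (-(-(Kτ * max (-(Mdiff ρ ρ0) - mτ) 0)))) ∧
    (0 < Mdiff ρ ρ0 → ρb 0 = rhoMinus β θ) ∧
    (Mdiff ρ ρ0 = 0 → rhoMinus β θ ≤ ρb 0 ∧ ρb 0 ≤ rhoPlus β θ) := by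
  have hX0 : 0 < X0 := hH2.1
  have hX : 0 < X := hX0.trans_le hXX0
  have h₀ := hH2.niceDensity
  have hpos := hH2.xA_pos hβθ
  obtain ⟨B, h⟩ := hrep.niceDensity hmin.1
  have lower := fun d hd =>
    boundary_lower (d := d) h h₀ hX hX0 hpos hθ hτ0 hKτ hmin hrep hd
  have upper := fun d hd =>
    boundary_upper (d := d) h h₀ hX hX0 hpos hθ hτ0 hKτ hmin hrep hd
  refine ⟨fun hM => ?_, fun hM => ?_, fun hM => ?_⟩
  · have h1 := lower (-1) ⟨-Mdiff ρ ρ0, by linarith, fun m _ hm' => by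
      rw [abs_of_neg hM, abs_of_neg (by linarith)]; linarith⟩
    have h2 := upper (-1) ⟨1, one_pos, fun m hm _ => by
      rw [abs_of_neg hM, abs_of_neg (by linarith)]; linarith⟩
    rw [le_antisymm h2 h1, rhoPlus, ← Real.exp_add]
    congr 1; ring
  · have h1 := lower 1 ⟨1, one_pos, fun m hm _ => by
      rw [abs_of_pos hM, abs_of_pos (by linarith)]; linarith⟩
    have h2 := upper 1 ⟨Mdiff ρ ρ0, hM, fun m _ hm' => by
      rw [abs_of_pos hM, abs_of_pos (by linarith)]; linarith⟩
    rw [le_antisymm h2 h1, rhoMinus, max_eq_right (by linarith)]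
    congr 1; ring
  · have h1 := lower 1 ⟨1, one_pos, fun m hm _ => by
      rw [hM, zero_add, abs_of_pos hm, abs_zero]; linarith⟩
    have h2 := upper (-1) ⟨1, one_pos, fun m hm _ => by
      rw [hM, zero_sub, abs_neg, abs_of_pos hm, abs_zero]; linarith⟩
    rw [hM, max_eq_right (by linarith)] at h1 h2
    constructor
    · refine le_trans (le_of_eq ?_) h1
      rw [rhoMinus]; congr 1; ring
    · refine h2.trans (le_of_eq ?_)
      rw [rhoPlus]; congr 1; ring

end
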